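/- If there exists an uncountable set F of entire functions (functions ℂ → ℂ analytic on all of ℂ) such that for every point z ∈ ℂ the set of values {f(z) : f ∈ F} is countable, then the Continuum Hypothesis 2^ℵ₀ = ℵ₁ holds. -/

import Mathlib

open Cardinal

/-!
By the identity theorem, two distinct members of the family agree at only countably many points.
Choose `ℵ₁` members of the family. They take only countably many values at each point, so some two
of them agree there. Hence the domain is covered by the agreement sets of the `ℵ₁` pairs, and being
a union of `ℵ₁` countable sets it has at most `ℵ₁` points. But a connected domain with
two points has at least `2 ^ ℵ₀` points, since a continuous function to `[0, 1]` taking the values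
`0` and `1` at these two points is surjective.
-/

open Function Set

universe u v w

section CountableAgreement

variable {X : Type u} {Y : Type v}

theorem lift_mk_le_of_pairwise_countable_agreement {ι : Type w} [Infinite ι] {f : ι → X → Y}
    (hagree : Pairwise fun i j ↦ {x | f i x = f j x}.Countable)
    (heval : ∀ x, ¬ Injective fun i ↦ f i x) : lift.{w} #X ≤ lift.{u} #ι := by
  let agreeSet (p : {p : ι × ι // p.1 ≠ p.2}) : Set X := {x | f p.1.1 x = f p.1.2 x}
  have hcover : ⋃ p, agreeSet p = Set.univ := by
    refine eq_univ_of_forall fun x ↦ ?_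
    obtain ⟨i, j, hij, hne⟩ := not_injective_iff.1 (heval x)
    exact mem_iUnion.2 ⟨⟨(i, j), hne⟩, hij⟩
  have hpairs : #{p : ι × ι // p.1 ≠ p.2} ≤ #ι := by
    simpa only [mk_prod, lift_id, mul_eq_self (aleph0_le_mk ι)] using
      mk_subtype_le fun p : ι × ι ↦ p.1 ≠ p.2
  have hcount (p) : lift.{w} #(agreeSet p) ≤ ℵ₀ := lift_le_aleph0.2 (hagree p.2).le_aleph0
  have hι : ℵ₀ ≤ lift.{u} #ι := aleph0_le_lift.2 (aleph0_le_mk ι)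
  calc lift.{w} #X = lift.{w} #(⋃ p, agreeSet p) := by rw [hcover, mk_univ]
    _ ≤ lift.{u} #{p : ι × ι // p.1 ≠ p.2} * ⨆ p, lift.{w} #(agreeSet p) := mk_iUnion_le_lift _
    _ ≤ lift.{u} #ι * ℵ₀ := mul_le_mul' (lift_le.2 hpairs) (ciSup_le' hcount)
    _ = lift.{u} #ι := mul_aleph0_eq hι

theorem mk_le_aleph_one_of_countable_eval_image {F : Set (X → Y)}
    (hagree : F.Pairwise fun f g ↦ {x | f x = g x}.Countable) (hunc : ¬ F.Countable)
    (heval : ∀ x, ((fun f ↦ f x) '' F).Countable) : #X ≤ ℵ₁ := by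
  obtain ⟨G, hGF, hG⟩ : ∃ G ⊆ F, #G = ℵ₁ := by
    rwa [← le_mk_iff_exists_subset, aleph_one_le_iff, ← not_le, le_aleph0_iff_set_countable]
  have hG_unc : ¬ G.Countable := by
    rw [← le_aleph0_iff_set_countable, hG]
    exact aleph0_lt_aleph_one.not_ge
  have hG_inf : Infinite G := infinite_coe_iff.2 fun h ↦ hG_unc h.countable
  have hG_eval (x : X) : ¬ InjOn (fun f ↦ f x) G := fun hinj ↦
    hG_unc <| countable_of_injective_of_countable_image hinj ((heval x).mono (image_mono hGF))
  have hmk := lift_mk_le_of_pairwise_countable_agreement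
    (fun f g hne ↦ hagree (hGF f.2) (hGF g.2) (Subtype.coe_injective.ne hne))
    fun x hinj ↦ hG_eval x (injOn_iff_injective.2 hinj)
  rwa [hG, lift_aleph, Ordinal.lift_one, lift_le_aleph_one] at hmk

end CountableAgreement

theorem continuum_le_mk_of_isPreconnected {X : Type u} [TopologicalSpace X] [T35Space X]
    {U : Set X} (hU : IsPreconnected U) (hU_nontrivial : U.Nontrivial) : 𝔠 ≤ #U := by
  obtain ⟨x, hx, y, hy, hxy⟩ := hU_nontrivial
  obtain ⟨φ, hφ, hφx, hφy⟩ :=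
    CompletelyRegularSpace.completely_regular x {y} isClosed_singleton hxy
  have hφ_surj : φ '' U = Set.univ := by
    refine univ_subset_iff.1 fun t _ ↦ (hU.image φ hφ.continuousOn).Icc_subset
      (mem_image_of_mem φ hx) (mem_image_of_mem φ hy) ?_
    rw [hφx, hφy rfl]
    exact ⟨unitInterval.nonneg', unitInterval.le_one'⟩
  have hmk := mk_image_le_lift (f := φ) (s := U)
  rwa [hφ_surj, mk_univ, mk_Icc_real zero_lt_one, lift_continuum, lift_uzero] at hmk

section Analytic

variable {𝕜 : Type u} {E : Type v} [NontriviallyNormedField 𝕜] [SecondCountableTopology 𝕜]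
  [NormedAddCommGroup E] [NormedSpace 𝕜 E] {U : Set 𝕜}

theorem countable_agreement_of_analyticOnNhd {f g : 𝕜 → E} (hf : AnalyticOnNhd 𝕜 f U)
    (hg : AnalyticOnNhd 𝕜 g U) (hU : IsPreconnected U) (hne : ¬ EqOn f g U) :
    ({z | f z = g z} ∩ U).Countable :=
  (HereditarilyLindelofSpace.isLindelof _).countable_of_isDiscrete <|
    isDiscrete_of_codiscreteWithin <|
      (hf.eqOn_or_eventually_ne_of_preconnected hg hU).resolve_left hne

theorem CH_of_exists_uncountable_family_general (hU : IsPreconnected U)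
    (hU_nontrivial : U.Nontrivial) {F : Set (𝕜 → E)} (hF : ∀ f ∈ F, AnalyticOnNhd 𝕜 f U)
    (hunc : ¬ (U.domRestrict '' F).Countable) (heval : ∀ z ∈ U, ((fun f ↦ f z) '' F).Countable) :
    (2 : Cardinal.{w}) ^ ℵ₀ = ℵ₁ := by
  have hagree : (U.domRestrict '' F).Pairwise fun f g ↦ {z | f z = g z}.Countable := by
    rintro _ ⟨f, hf, rfl⟩ _ ⟨g, hg, rfl⟩ hne
    rw [Ne, domRestrict_eq_domRestrict_iff] at hne
    have hcount : (Subtype.val ⁻¹' ({z | f z = g z} ∩ U) : Set U).Countable :=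
      (countable_agreement_of_analyticOnNhd (hF f hf) (hF g hg) hU hne).preimage
        Subtype.val_injective
    exact hcount.mono (subset_inter (fun _ hz ↦ hz) fun z _ ↦ z.2)
  have hmk : #U ≤ ℵ₁ := mk_le_aleph_one_of_countable_eval_image hagree hunc fun z ↦ by
    simpa only [image_image, domRestrict_apply] using heval z z.2
  have hCH : (𝔠 : Cardinal.{u}) ≤ ℵ₁ :=
    (continuum_le_mk_of_isPreconnected hU hU_nontrivial).trans hmk
  rw [← lift_le_aleph_one.{u, w}, lift_continuum, ← lift_continuum.{u, w}, lift_le_aleph_one] at hCH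
  rw [two_power_aleph0]
  exact hCH.antisymm aleph_one_le_continuum

end Analytic

/-- Dixon's direction of Wetzel's problem: if there is an uncountable family of
entire functions whose set of values at each point of `ℂ` is countable, then
the Continuum Hypothesis holds. -/
theorem CH_of_exists_uncountable_family
    (h : ∃ F : Set (ℂ → ℂ),
      (∀ f ∈ F, Differentiable ℂ f) ∧
      ¬ F.Countable ∧
      ∀ z : ℂ, ((fun f : ℂ → ℂ => f z) '' F).Countable) :
    (2 : Cardinal) ^ Cardinal.aleph0 = Cardinal.aleph 1 := by
  obtain ⟨F, hF, hunc, heval⟩ := h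
  have hinj : InjOn (Set.univ : Set ℂ).domRestrict F := fun f _ g _ hfg ↦
    eqOn_univ f g |>.1 (domRestrict_eq_domRestrict_iff.1 hfg)
  exact CH_of_exists_uncountable_family_general isPreconnected_univ nontrivial_univ
    (fun f hf z _ ↦ (hF f hf).analyticAt z)
    (mt (countable_of_injective_of_countable_image hinj) hunc) fun z _ ↦ heval z
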